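/- Let Q be a Borel probability measure on ℝ, α ∈ (0, 1], and suppose there exists q_α ∈ ℝ with Q((−∞, q_α]) = α (e.g., Q atomless). Define the truncated renormalized measure Q̃(B) := Q(B ∩ (−∞, q_α]) / α for Borel B ⊆ ℝ, and the CVaR risk envelope A := { P Borel probability measure on ℝ : P ≪ Q and dP/dQ ≤ 1/α Q-a.e. }. Then: (i) Q̃ ∈ A; (ii) Q̃ is the FOSD-minimal element of A, i.e., Q̃ ⪯_sd P for every P ∈ A; and (iii) for every bounded measurable decreasing v : ℝ → ℝ, sup_{P ∈ A} ∫ v dP = ∫ v dQ̃. -/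

import Mathlib

/-!
The bound `dP/dQ ≤ 1/α` says that `P ≤ α⁻¹ • Q` as measures, so on the lower tail `(-∞, q_α]`
every `P` in the envelope is dominated by `Q̃`, which in turn charges nothing outside that tail.
For `v` increasing, `w = v - v(q_α)` is nonpositive on the tail and nonnegative off it, whence
`∫ w dQ̃ ≤ ∫_{(-∞, q_α]} w dP ≤ ∫ w dP`. Since both measures are probability measures, the constant
`v(q_α)` cancels, which is (ii) (`integral_le_of_restrict_Iic_le`). Part (iii) is (ii) applied to
`-v`, the supremum being attained at `Q̃ ∈ A`.
-/

open MeasureTheory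

/-- A real-valued function is bounded. -/
def IsBddFun {α : Type*} (f : α → ℝ) : Prop := ∃ C : ℝ, ∀ x, |f x| ≤ C

/-- First-order stochastic dominance `μ ⪯_sd ν` for Borel measures on ℝ:
`∫ v dμ ≤ ∫ v dν` for every bounded increasing Borel `v`. -/
def FOSDle (μ ν : Measure ℝ) : Prop :=
  ∀ v : ℝ → ℝ, Measurable v → IsBddFun v → Monotone v → ∫ x, v x ∂μ ≤ ∫ x, v x ∂ν

lemma IsBddFun.integrable {v : ℝ → ℝ} (hb : IsBddFun v) (hv : Measurable v) (μ : Measure ℝ)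
    [IsFiniteMeasure μ] : Integrable v μ := by
  obtain ⟨C, hC⟩ := hb
  exact Integrable.of_bound hv.aestronglyMeasurable C (Filter.Eventually.of_forall hC)

/-- A probability measure `μ` carried by `(-∞, q]` and dominating `P` there precedes `P` in
first-order stochastic dominance. -/
lemma integral_le_of_restrict_Iic_le {μ P : Measure ℝ} [IsProbabilityMeasure μ]
    [IsProbabilityMeasure P] {q : ℝ} (hμ : ∀ᵐ x ∂μ, x ∈ Set.Iic q)
    (hle : P.restrict (Set.Iic q) ≤ μ) : FOSDle μ P := by
  intro v hv hb hmono
  have hvμ := hb.integrable hv μ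
  have hvP := hb.integrable hv P
  have htail : ∫ x in Set.Iic q, (v q - v x) ∂P ≤ ∫ x, (v q - v x) ∂μ := by
    refine integral_mono_measure hle ?_ ((integrable_const _).sub hvμ)
    filter_upwards [hμ] with x hx
    exact sub_nonneg.2 (hmono hx)
  have hoff : ∫ x in (Set.Iic q)ᶜ, (v q - v x) ∂P ≤ 0 := by
    refine setIntegral_nonpos measurableSet_Iic.compl fun x hx => ?_
    exact sub_nonpos.2 (hmono (le_of_not_ge (Set.notMem_of_mem_compl hx)))
  have hsplit := integral_add_compl (measurableSet_Iic (a := q))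
    ((integrable_const (v q)).sub hvP)
  have h1 : ∫ x, (v q - v x) ∂μ = v q - ∫ x, v x ∂μ := by
    rw [integral_sub (integrable_const _) hvμ]; simp
  have h2 : ∫ x, (v q - v x) ∂P = v q - ∫ x, v x ∂P := by
    rw [integral_sub (integrable_const _) hvP]; simp
  simp only [Pi.sub_apply] at hsplit
  linarith

lemma le_smul_of_rnDeriv_le {P Q : Measure ℝ} [IsFiniteMeasure P] [IsFiniteMeasure Q]
    (hac : P ≪ Q) {c : ENNReal} (h : ∀ᵐ z ∂Q, P.rnDeriv Q z ≤ c) : P ≤ c • Q := by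
  rw [← Measure.withDensity_rnDeriv_eq P Q hac, ← withDensity_const]
  exact withDensity_mono h

/-- let `Q` be a Borel probability measure on ℝ, `α ∈ (0,1]`, and `q_α`
with `Q((-∞, q_α]) = α`. Let `Q̃` be `Q` truncated to the lower `α`-tail and
renormalized, and let `A` be the CVaR risk envelope. Then (i) `Q̃ ∈ A`; (ii) `Q̃` is the
FOSD-minimal element of `A`; (iii) for every bounded measurable decreasing `v`,
`sup_{P ∈ A} ∫ v dP = ∫ v dQ̃`. -/
theorem cvar_envelope_minimal_element (Q : Measure ℝ) (hQ : IsProbabilityMeasure Q)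
    (α : ℝ) (hα0 : 0 < α) (hα1 : α ≤ 1)
    (qa : ℝ) (hqa : Q (Set.Iic qa) = ENNReal.ofReal α) :
    let Qtil : Measure ℝ := (ENNReal.ofReal α)⁻¹ • Q.restrict (Set.Iic qa)
    let A : Set (Measure ℝ) := {P | IsProbabilityMeasure P ∧ P ≪ Q ∧
      ∀ᵐ z ∂Q, P.rnDeriv Q z ≤ ENNReal.ofReal (1 / α)}
    Qtil ∈ A ∧
    (∀ P ∈ A, FOSDle Qtil P) ∧
    (∀ v : ℝ → ℝ, Measurable v → IsBddFun v → Antitone v →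
      sSup ((fun P : Measure ℝ => ∫ z, v z ∂P) '' A) = ∫ z, v z ∂Qtil) := by
  intro Qtil A
  have hα : ENNReal.ofReal α ≠ 0 := by simpa using hα0
  have hc : ENNReal.ofReal (1 / α) = (ENNReal.ofReal α)⁻¹ := by
    rw [one_div, ENNReal.ofReal_inv_of_pos hα0]
  have hprob : IsProbabilityMeasure Qtil := by
    constructor
    simp [Qtil, hqa, ENNReal.inv_mul_cancel hα ENNReal.ofReal_ne_top]
  have hmem : Qtil ∈ A := by
    refine ⟨hprob, Measure.smul_absolutelyContinuous.trans
      Measure.restrict_le_self.absolutelyContinuous, ?_⟩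
    filter_upwards [Measure.rnDeriv_smul_left_of_ne_top (Q.restrict (Set.Iic qa)) Q
      (ENNReal.inv_ne_top.2 hα), Measure.rnDeriv_restrict_self Q (measurableSet_Iic (a := qa))]
      with z h1 h2
    rw [h1, hc, Pi.smul_apply, h2, smul_eq_mul]
    refine mul_le_of_le_one_right' ?_
    exact Set.indicator_le_self' (fun _ _ => zero_le) z
  have hcarried : ∀ᵐ x ∂Qtil, x ∈ Set.Iic qa :=
    Measure.ae_smul_measure (ae_restrict_mem measurableSet_Iic) _
  have hmin : ∀ P ∈ A, FOSDle Qtil P := by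
    rintro P ⟨hP, hac, hd⟩
    refine integral_le_of_restrict_Iic_le hcarried ?_
    have h := Measure.restrict_mono_measure (le_smul_of_rnDeriv_le hac hd) (Set.Iic qa)
    rwa [Measure.restrict_smul, hc] at h
  refine ⟨hmem, hmin, fun v hv hb hanti => ?_⟩
  refine IsGreatest.csSup_eq ⟨⟨Qtil, hmem, rfl⟩, ?_⟩
  rintro _ ⟨P, hP, rfl⟩
  have hb' : IsBddFun (fun x => -v x) := by
    obtain ⟨C, hC⟩ := hb
    exact ⟨C, fun x => by simpa using hC x⟩
  have h := hmin P hP (fun x => -v x) hv.neg hb' hanti.neg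
  simpa [integral_neg] using h
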